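/- Let M be a skew-symmetric or symmetric V×V matrix over a field F representing (via a matrix representation (M,a,b)) a Lagrangian chain-group N on V to K = F². Then for every X ⊆ V, rank(M[X, V∖X]) = |X| − dim(N×X). -/

import Mathlib

open Matrix

variable {V : Type*} [Fintype V] [DecidableEq V] {F : Type*} [Field F]

/-- The symmetric bilinear form `b⁺((a,b),(c,d)) = ad + bc` on `K = F²`. -/
def bplus : F × F → F × F → F := fun x y => x.1 * y.2 + x.2 * y.1

/-- The skew-symmetric bilinear form `b⁻((a,b),(c,d)) = ad − bc` on `K = F²`. -/
def bminus : F × F → F × F → F := fun x y => x.1 * y.2 - x.2 * y.1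

/-- The submatrix of `M` with rows indexed by `X` and columns indexed by `Y`. -/
def psub (M : Matrix V V F) (X Y : Finset V) : Matrix {a // a ∈ X} {a // a ∈ Y} F :=
  fun i j => M i j

/-- Restriction of chains to a subset `X` of the ground set. -/
def res (F K : Type*) [Semiring F] [AddCommMonoid K] [Module F K]
    {V : Type*} (X : Finset V) : (V → K) →ₗ[F] ({x // x ∈ X} → K) :=
  LinearMap.funLeft F K Subtype.val

/-- Chains vanishing outside `X`. -/
def vanish (F : Type*) [Semiring F] {K : Type*} [AddCommMonoid K] [Module F K]
    {V : Type*} (X : Finset V) : Submodule F (V → K) where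
  carrier := {f | ∀ v ∉ X, f v = 0}
  add_mem' := by
    intro a b ha hb v hv
    simp only [Pi.add_apply, ha v hv, hb v hv, add_zero]
  zero_mem' := by intro v hv; rfl
  smul_mem' := by
    intro c a ha v hv
    simp only [Pi.smul_apply, ha v hv, smul_zero]

/-- `N×X`, the restriction to `X` of the chains in `N` vanishing outside `X`. -/
def timesTo {K : Type*} [AddCommGroup K] [Module F K]
    (N : Submodule F (V → K)) (X : Finset V) : Submodule F ({x // x ∈ X} → K) :=
  (N ⊓ vanish F X).map (res F K X)

/-- Supplementary vectors are linearly independent. -/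
lemma eq_zero_of_smul_add_smul_eq_zero {β : F × F → F × F → F}
    (hβ : β = bplus ∨ β = bminus) {p q : F × F} (hp : β p p = 0) (hpq : β p q = 1)
    (hq : β q q = 0) {s t : F} (h : s • p + t • q = 0) : s = 0 ∧ t = 0 := by
  have h₁ : s * p.1 + t * q.1 = 0 := by simpa using congrArg Prod.fst h
  have h₂ : s * p.2 + t * q.2 = 0 := by simpa using congrArg Prod.snd h
  rcases hβ with rfl | rfl
  · simp only [bplus] at hp hq hpq
    constructor
    · linear_combination q.2 * h₁ + q.1 * h₂ - s * hpq - t * hq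
    · linear_combination p.2 * h₁ + p.1 * h₂ - t * hpq - s * hp
  · simp only [bminus] at hpq
    constructor
    · linear_combination q.2 * h₁ - q.1 * h₂ - s * hpq
    · linear_combination p.1 * h₂ - p.2 * h₁ - t * hpq

/-- The chain `∑ i, c i • f_i` for the matrix representation `(M, a, b)`. -/
def chainOf (M : Matrix V V F) (a b : V → F × F) : (V → F) →ₗ[F] (V → F × F) where
  toFun c j := (c ᵥ* M) j • a j + c j • b j
  map_add' c d := by
    ext j : 1
    simp only [add_vecMul, Pi.add_apply, add_smul]
    abel
  map_smul' r c := by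
    ext j : 1
    simp only [smul_vecMul, Pi.smul_apply, smul_assoc, smul_add, RingHom.id_apply]

lemma range_chainOf (M : Matrix V V F) (a b : V → F × F) :
    LinearMap.range (chainOf M a b) = Submodule.span F (Set.range fun i : V => fun j : V =>
      if j = i then M i i • a i + b i else M i j • a j) := by
  rw [LinearMap.range_eq_map, ← (Pi.basisFun F V).span_eq, Submodule.map_span, ← Set.range_comp]
  congr 2
  ext i : 1
  funext j
  rcases eq_or_ne j i with rfl | hji
  · simp [chainOf]
  · simp [chainOf, hji]

/-- Extension of a coefficient vector on `X` by zero. -/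
noncomputable def extendZero {V : Type*} (X : Finset V) : ({x // x ∈ X} → F) →ₗ[F] (V → F) :=
  Function.ExtendByZero.linearMap F Subtype.val

lemma extendZero_apply_coe {V : Type*} (X : Finset V) (c : {x // x ∈ X} → F) (i : {x // x ∈ X}) :
    extendZero X c i = c i :=
  Subtype.val_injective.extend_apply c 0 i

lemma extendZero_apply_of_notMem {V : Type*} {X : Finset V} (c : {x // x ∈ X} → F) {v : V}
    (hv : v ∉ X) :
    extendZero X c v = 0 :=
  Function.extend_apply' c (0 : V → F) v fun ⟨i, hi⟩ => hv (hi ▸ i.2)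

lemma extendZero_vecMul (M : Matrix V V F) (X : Finset V) (c : {x // x ∈ X} → F)
    (j : {x // x ∈ Xᶜ}) : (extendZero X c ᵥ* M) j = (c ᵥ* psub M X Xᶜ) j := by
  simp only [vecMul, dotProduct, psub]
  rw [← Finset.sum_subset (Finset.subset_univ X)
      fun i _ hi => by rw [extendZero_apply_of_notMem c hi, zero_mul], ← Finset.sum_coe_sort X]
  exact Finset.sum_congr rfl fun i _ => by rw [extendZero_apply_coe]

lemma timesTo_range_chainOf (M : Matrix V V F) {a b : V → F × F}
    (hab : ∀ v (s t : F), s • a v + t • b v = 0 → s = 0 ∧ t = 0) (X : Finset V) :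
    timesTo (LinearMap.range (chainOf M a b)) X =
      (LinearMap.ker (psub M X Xᶜ).vecMulLinear).map
        (res F (F × F) X ∘ₗ chainOf M a b ∘ₗ extendZero X) := by
  ext g
  constructor
  · rintro ⟨_, ⟨⟨c, rfl⟩, hc⟩, rfl⟩
    have hc' : ∀ v ∉ X, (c ᵥ* M) v = 0 ∧ c v = 0 := fun v hv => hab v _ _ (hc v hv)
    have hext : extendZero X (fun i => c i) = c := by
      ext v
      by_cases hv : v ∈ X
      · exact extendZero_apply_coe X _ ⟨v, hv⟩
      · rw [extendZero_apply_of_notMem _ hv, (hc' v hv).2]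
    refine ⟨fun i => c i, ?_, by simp [hext]⟩
    ext j
    simpa [← extendZero_vecMul, hext] using (hc' j (Finset.mem_compl.1 j.2)).1
  · rintro ⟨c, hc, rfl⟩
    refine ⟨_, ⟨⟨extendZero X c, rfl⟩, fun v hv => ?_⟩, rfl⟩
    have hcv : (extendZero X c ᵥ* M) v = 0 :=
      (extendZero_vecMul M X c ⟨v, Finset.mem_compl.2 hv⟩).trans (congrFun hc _)
    simp [chainOf, hcv, extendZero_apply_of_notMem c hv]

lemma injective_res_chainOf_extendZero {V : Type*} [Fintype V] (M : Matrix V V F) {a b : V → F × F}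
    (hab : ∀ v (s t : F), s • a v + t • b v = 0 → s = 0 ∧ t = 0) (X : Finset V) :
    Function.Injective (res F (F × F) X ∘ₗ chainOf M a b ∘ₗ extendZero X) := by
  refine (injective_iff_map_eq_zero _).2 fun c hc => ?_
  ext i
  rw [← extendZero_apply_coe X c i]
  exact (hab i _ _ (congrFun hc i)).2

lemma rank_add_finrank_ker_vecMulLinear {m n : Type*} [Fintype m] [Fintype n]
    (A : Matrix m n F) :
    A.rank + Module.finrank F (LinearMap.ker A.vecMulLinear) = Fintype.card m := by
  classical
  rw [← rank_transpose, rank, mulVecLin_transpose, LinearMap.finrank_range_add_finrank_ker,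
    Module.finrank_fintype_fun_eq_card]

/-- Let `M` be a skew-symmetric or symmetric matrix representing (via a matrix
representation `(M,a,b)`) the Lagrangian chain-group `N` spanned by the chains
`f_i`.  Then for every `X ⊆ V`, `rank M[X, V∖X] = |X| − dim(N×X)`. -/
theorem rank_offdiag_eq (M : Matrix V V F) (β : F × F → F × F → F)
    (a b : V → F × F)
    (hM : (Mᵀ = -M ∧ (∀ i, M i i = 0) ∧ β = (bplus : F × F → F × F → F)) ∨
          (Mᵀ = M ∧ β = (bminus : F × F → F × F → F)))
    (hsupp : ∀ x, β (a x) (a x) = 0 ∧ β (b x) (b x) = 0 ∧ β (a x) (b x) = 1)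
    (X : Finset V) :
    (psub M X Xᶜ).rank
        + Module.finrank F
          (timesTo
            (Submodule.span F
              (Set.range fun i : V => fun j : V =>
                if j = i then M i i • a i + b i else M i j • a j)) X)
      = X.card := by
  have hβ : β = bplus ∨ β = bminus := hM.imp (fun h => h.2.2) (fun h => h.2)
  have hab : ∀ v (s t : F), s • a v + t • b v = 0 → s = 0 ∧ t = 0 := fun v _ _ h =>
    eq_zero_of_smul_add_smul_eq_zero hβ (hsupp v).1 (hsupp v).2.2 (hsupp v).2.1 h
  rw [← range_chainOf, timesTo_range_chainOf M hab,
    ← (Submodule.equivMapOfInjective _ (injective_res_chainOf_extendZero M hab X) _).finrank_eq,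
    rank_add_finrank_ker_vecMulLinear, Fintype.card_coe]
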